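/- Quantitative Laplace principle: Let E : ℝ^d → ℝ be continuous with minimum value 0 attained at v*, and suppose there exist E_∞, R₀, η > 0 and ν ∈ (0, ∞) such that ‖v − v*‖ ≤ (1/η) E(v)^ν for all v ∈ B_{R₀}(v*) and E(v) > E_∞ for all v ∉ B_{R₀}(v*). Let μ be a probability measure on ℝ^d with finite first moment, and fix α > 0. Then for any r ∈ (0, R₀] and q > 0 with q + E_r ≤ E_∞, where E_r := sup_{v ∈ B_r(v*)} E(v), the consensus point v_α(μ) := (∫ v e^{−αE(v)} dμ(v)) / (∫ e^{−αE(v)} dμ(v)) satisfies ‖v_α(μ) − v*‖ ≤ (q + E_r)^ν/η + (exp(−αq)/μ(B_r(v*))) · ∫‖v − v*‖ dμ(v), provided μ(B_r(v*)) > 0. -/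

import Mathlib

open MeasureTheory

/-- Quantitative Laplace principle. -/
theorem stmt_3 (d : ℕ) (E : EuclideanSpace ℝ (Fin d) → ℝ)
    (vstar : EuclideanSpace ℝ (Fin d))
    (hE : Continuous E) (hEmin : E vstar = 0) (hEnonneg : ∀ v, 0 ≤ E v)
    (Einfty R0 η ν : ℝ) (hEinfty : 0 < Einfty) (hR0 : 0 < R0) (hη : 0 < η) (hν : 0 < ν)
    (hcoer : ∀ v ∈ Metric.closedBall vstar R0, ‖v - vstar‖ ≤ (1 / η) * (E v) ^ ν)
    (hfar : ∀ v ∉ Metric.closedBall vstar R0, Einfty < E v)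
    (μ : Measure (EuclideanSpace ℝ (Fin d))) [IsProbabilityMeasure μ]
    (hmom : Integrable (fun v => ‖v‖) μ)
    (α : ℝ) (hα : 0 < α)
    (hint1 : Integrable (fun v => Real.exp (-α * E v)) μ)
    (hint2 : Integrable (fun v => Real.exp (-α * E v) • v) μ)
    (r q : ℝ) (hrpos : 0 < r) (hrR0 : r ≤ R0) (hq : 0 < q)
    (hqEr : q + sSup (E '' Metric.closedBall vstar r) ≤ Einfty)
    (hmass : 0 < (μ (Metric.closedBall vstar r)).toReal) :
    ‖(∫ v, Real.exp (-α * E v) ∂μ)⁻¹ • (∫ v, Real.exp (-α * E v) • v ∂μ) - vstar‖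
      ≤ (q + sSup (E '' Metric.closedBall vstar r)) ^ ν / η
        + Real.exp (-α * q) / (μ (Metric.closedBall vstar r)).toReal
            * ∫ v, ‖v - vstar‖ ∂μ := by
  set S := sSup (E '' Metric.closedBall vstar r) with hS
  set m := (μ (Metric.closedBall vstar r)).toReal with hm
  set Z := ∫ v, Real.exp (-α * E v) ∂μ with hZ
  have hbdd : BddAbove (E '' Metric.closedBall vstar r) :=
    ((isCompact_closedBall vstar r).image hE).bddAbove
  have hES : ∀ v ∈ Metric.closedBall vstar r, E v ≤ S := fun v hv =>
    le_csSup hbdd ⟨v, hv, rfl⟩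
  have hS0 : 0 ≤ S := by
    have := hES vstar (Metric.mem_closedBall_self hrpos.le)
    linarith
  have hZlow : m * Real.exp (-α * S) ≤ Z := by
    have h1 : ∫ v in Metric.closedBall vstar r, Real.exp (-α * S) ∂μ
        ≤ ∫ v in Metric.closedBall vstar r, Real.exp (-α * E v) ∂μ := by
      refine setIntegral_mono_on (integrable_const _) hint1.integrableOn
        Metric.isClosed_closedBall.measurableSet ?_
      intro v hv
      have := hES v hv
      exact Real.exp_le_exp.mpr (by nlinarith)
    have h2 : ∫ v in Metric.closedBall vstar r, Real.exp (-α * E v) ∂μ ≤ Z :=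
      setIntegral_le_integral hint1 (Filter.Eventually.of_forall fun v => (Real.exp_pos _).le)
    rw [setIntegral_const, smul_eq_mul] at h1
    exact h1.trans h2
  have hZpos : 0 < Z := lt_of_lt_of_le (mul_pos hmass (Real.exp_pos _)) hZlow
  have hid : Integrable (fun v : EuclideanSpace ℝ (Fin d) => v) μ :=
    (integrable_norm_iff (by fun_prop)).mp hmom
  have hsub : Integrable (fun v => ‖v - vstar‖) μ := (hid.sub (integrable_const vstar)).norm
  have hw : Integrable (fun v => Real.exp (-α * E v) • (v - vstar)) μ := by
    simp only [smul_sub]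
    exact hint2.sub (hint1.smul_const vstar)
  have heq : Z⁻¹ • (∫ v, Real.exp (-α * E v) • v ∂μ) - vstar
      = Z⁻¹ • ∫ v, Real.exp (-α * E v) • (v - vstar) ∂μ := by
    simp only [smul_sub]
    rw [integral_sub hint2 (hint1.smul_const vstar), integral_smul_const, smul_sub, smul_smul,
      ← hZ, inv_mul_cancel₀ hZpos.ne', one_smul]
  set M := ∫ v, ‖v - vstar‖ ∂μ with hM
  have hM0 : 0 ≤ M := integral_nonneg fun v => norm_nonneg _
  have hpt : ∀ v, ‖Real.exp (-α * E v) • (v - vstar)‖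
      ≤ Real.exp (-α * E v) * ((q + S) ^ ν / η) + Real.exp (-α * (q + S)) * ‖v - vstar‖ := by
    intro v
    rw [norm_smul, Real.norm_of_nonneg (Real.exp_pos _).le]
    have e1 := Real.exp_pos (-α * E v)
    have e2 := Real.exp_pos (-α * (q + S))
    have n0 := norm_nonneg (v - vstar)
    by_cases h : E v ≤ q + S
    · have hv : v ∈ Metric.closedBall vstar R0 := by
        by_contra hc
        have := hfar v hc
        linarith
      have h1 : ‖v - vstar‖ ≤ (q + S) ^ ν / η := by
        refine (hcoer v hv).trans ?_
        rw [one_div, inv_mul_eq_div]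
        exact div_le_div_of_nonneg_right (Real.rpow_le_rpow (hEnonneg v) h hν.le) hη.le
      have := mul_le_mul_of_nonneg_left h1 e1.le
      have := mul_nonneg e2.le n0
      linarith
    · have h1 : Real.exp (-α * E v) ≤ Real.exp (-α * (q + S)) :=
        Real.exp_le_exp.mpr (by push Not at h; nlinarith)
      have h2 := mul_le_mul_of_nonneg_right h1 n0
      have h3 : 0 ≤ Real.exp (-α * E v) * ((q + S) ^ ν / η) :=
        mul_nonneg e1.le (div_nonneg (Real.rpow_nonneg (by linarith) _) hη.le)
      linarith
  have hmain : ‖∫ v, Real.exp (-α * E v) • (v - vstar) ∂μ‖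
      ≤ Z * ((q + S) ^ ν / η) + Real.exp (-α * (q + S)) * M := by
    refine (norm_integral_le_integral_norm _).trans ?_
    refine (integral_mono hw.norm ((hint1.mul_const _).add (hsub.const_mul _)) hpt).trans ?_
    simp only [Pi.add_apply]
    rw [integral_add (hint1.mul_const _) (hsub.const_mul _), integral_mul_const,
      integral_const_mul]
  rw [heq, norm_smul, Real.norm_of_nonneg (inv_nonneg.mpr hZpos.le), inv_mul_eq_div,
    div_le_iff₀ hZpos]
  refine hmain.trans ?_
  have hexp : Real.exp (-α * (q + S)) = Real.exp (-α * q) * Real.exp (-α * S) := by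
    rw [← Real.exp_add]; ring_nf
  have hc : 0 ≤ Real.exp (-α * q) / m * M :=
    mul_nonneg (div_nonneg (Real.exp_pos _).le hmass.le) hM0
  have hlast := mul_le_mul_of_nonneg_left hZlow hc
  have h5 : Real.exp (-α * q) / m * M * (m * Real.exp (-α * S))
      = Real.exp (-α * (q + S)) * M := by
    rw [hexp]; field_simp
  rw [h5] at hlast
  linarith
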